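/- There exist universal constants c₁, c₂ > 0 such that the following holds for every dimension d: if f(x, y) is a log-concave joint probability density on ℝ^d × ℝ^d of a random pair (X, Y), f(x) := ∫ f(x, y) dy is the first marginal density, and f(y|x) := f(x, y)/f(x) is the conditional density, then P( | −log f(Y|X) − E[−log f(Y|X)] | > t ) ≤ 2 c₁ exp( −(c₂/2) min(t, t²/d) ) for all t ≥ 0, where E[−log f(Y|X)] = h(Y|X) is the conditional differential entropy. -/

import Mathlib

/-!
Write `V` for a convex potential with `∫ exp (-V) = 1` in dimension `n`. For the information content
`V` itself we follow Fradelizi, Madiman and Wang. The function `s V(x / s)` is jointly convex in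
`s > 0` and `x`, so by Prékopa's theorem its partition function
`∫ exp (-s V(x / s)) dx = s ^ n ∫ exp (-s V)` is log-concave in `s`. With `s = 1 - β` this says that
`cgf V β + n log (1 - β)` is concave in `β`, and comparing with its tangent at `β = 0` gives
`cgf V β ≤ β E V + n (-β - log (1 - β))`, hence sub-exponential tails by Chernoff's bound.

For a joint density `exp (-W)`, Prékopa's theorem shows that the marginal density of `X` is again
of the form `exp (-U)` with `U` convex. Since `-log f(Y|X) = W(X, Y) - U(X)`, the conditional
information content deviates from its mean by more than `t` only if `W(X, Y)` or `U(X)` deviates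
from its mean by more than `t / 2`.
-/

open MeasureTheory Real

section

open ProbabilityTheory Set
open scoped ENNReal Pointwise

/-! ### The Prékopa–Leindler inequality -/

theorem volume_add_volume_le_volume_add_of_isCompact {K L : Set ℝ} (hK : IsCompact K)
    (hL : IsCompact L) (hK₀ : K.Nonempty) (hL₀ : L.Nonempty) :
    volume K + volume L ≤ volume (K + L) := by
  -- `K + min L` and `max K + L` both lie in `K + L` and meet only at `max K + min L`.
  obtain ⟨k, hk⟩ := hK.exists_isGreatest hK₀
  obtain ⟨l, hl⟩ := hL.exists_isLeast hL₀
  have translate_K : volume ((· + -l) ⁻¹' K) = volume K := measure_preimage_add_right _ _ _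
  have translate_L : volume ((· + -k) ⁻¹' L) = volume L := measure_preimage_add_right _ _ _
  have disjoint : AEDisjoint volume ((· + -l) ⁻¹' K) ((· + -k) ⁻¹' L) := by
    refine measure_mono_null (t := {k + l}) ?_ (by simp)
    rintro x ⟨hxK, hxL⟩
    have := hk.2 hxK
    have := hl.2 hxL
    exact mem_singleton_iff.2 (by linarith)
  rw [← translate_K, ← translate_L,
    ← measure_union₀ ((measurable_add_const _) hL.measurableSet).nullMeasurableSet disjoint]
  refine measure_mono (union_subset (fun x hx ↦ ?_) fun x hx ↦ ?_)
  · exact ⟨_, hx, l, hl.1, by simp⟩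
  · exact ⟨k, hk.1, _, hx, by simp⟩

theorem volume_add_volume_le_volume_add {A B : Set ℝ} (hA : MeasurableSet A)
    (hB : MeasurableSet B) (hA₀ : A.Nonempty) (hB₀ : B.Nonempty) :
    volume A + volume B ≤ volume (A + B) := by
  obtain ⟨a, ha⟩ := hA₀
  obtain ⟨b, hb⟩ := hB₀
  rw [hA.measure_eq_iSup_isCompact, hB.measure_eq_iSup_isCompact]
  simp only [iSup_and']
  refine ENNReal.biSup_add_biSup_le' ⟨∅, empty_subset _, isCompact_empty⟩
    ⟨∅, empty_subset _, isCompact_empty⟩ fun K ⟨hKA, hK⟩ L ⟨hLB, hL⟩ ↦ ?_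
  calc volume K + volume L ≤ volume (insert a K) + volume (insert b L) := by
        gcongr <;> exact subset_insert _ _
    _ ≤ volume (insert a K + insert b L) :=
        volume_add_volume_le_volume_add_of_isCompact (hK.insert a) (hL.insert b)
          (insert_nonempty _ _) (insert_nonempty _ _)
    _ ≤ volume (A + B) := by
        gcongr <;> apply insert_subset <;> assumption

theorem mul_volume_add_mul_volume_le_volume_smul_add_smul {A B : Set ℝ} (hA : MeasurableSet A)
    (hB : MeasurableSet B) (hA₀ : A.Nonempty) (hB₀ : B.Nonempty) {a b : ℝ} (ha : 0 < a)
    (hb : 0 < b) :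
    ENNReal.ofReal a * volume A + ENNReal.ofReal b * volume B ≤ volume (a • A + b • B) := by
  have h := volume_add_volume_le_volume_add (hA.const_smul_of_ne_zero ha.ne')
    (hB.const_smul_of_ne_zero hb.ne') hA₀.smul_set hB₀.smul_set
  simpa [Measure.addHaar_smul, abs_of_pos, ha, hb] using h

theorem volume_Ioi_zero_inter_setOf_ofReal_lt (c : ℝ≥0∞) :
    volume (Ioi 0 ∩ {t : ℝ | ENNReal.ofReal t < c}) = c := by
  by_cases hc : c = ∞
  · simp [hc]
  have : Ioi 0 ∩ {t : ℝ | ENNReal.ofReal t < c} = Ioo 0 c.toReal := by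
    ext t
    exact and_congr_right fun ht : 0 < t ↦ ENNReal.ofReal_lt_iff_lt_toReal ht.le hc
  rw [this, Real.volume_Ioo, sub_zero, ENNReal.ofReal_toReal hc]

theorem lintegral_eq_lintegral_measure_ofReal_lt {α : Type*} [MeasurableSpace α] (μ : Measure α)
    [SFinite μ] {f : α → ℝ≥0∞} (hf : Measurable f) :
    ∫⁻ x, f x ∂μ = ∫⁻ t in Ioi (0 : ℝ), μ {x | ENNReal.ofReal t < f x} := by
  have hS : MeasurableSet {p : α × ℝ | ENNReal.ofReal p.2 < f p.1} :=
    measurableSet_lt (by fun_prop) (by fun_prop)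
  calc ∫⁻ x, f x ∂μ
      = ∫⁻ x, volume.restrict (Ioi 0) {t : ℝ | ENNReal.ofReal t < f x} ∂μ := by
        refine lintegral_congr fun x ↦ ?_
        rw [Measure.restrict_apply (measurableSet_lt (by fun_prop) (by fun_prop)), inter_comm,
          volume_Ioi_zero_inter_setOf_ofReal_lt]
    _ = (μ.prod (volume.restrict (Ioi 0))) {p | ENNReal.ofReal p.2 < f p.1} :=
        (Measure.prod_apply hS).symm
    _ = ∫⁻ t in Ioi (0 : ℝ), μ {x | ENNReal.ofReal t < f x} := Measure.prod_apply_symm hS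

theorem rpow_mul_rpow_le_ofReal_mul_add_ofReal_mul {a b : ℝ} (ha : 0 < a) (hb : 0 < b)
    (hab : a + b = 1) (x y : ℝ≥0∞) :
    x ^ a * y ^ b ≤ ENNReal.ofReal a * x + ENNReal.ofReal b * y := by
  have hpq : Real.HolderConjugate a⁻¹ b⁻¹ := ⟨by simpa using hab, by positivity, by positivity⟩
  simpa [← ENNReal.rpow_mul, ha.ne', hb.ne', ENNReal.ofReal_inv_of_pos, ha, hb, div_eq_mul_inv,
    mul_comm] using ENNReal.young_inequality (x ^ a) (y ^ b) hpq

theorem rpow_mul_rpow_self {a b : ℝ} (ha : 0 < a) (hb : 0 < b) (hab : a + b = 1) (x : ℝ≥0∞) :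
    x ^ a * x ^ b = x := by
  rw [← ENNReal.rpow_add_of_nonneg _ _ ha.le hb.le, hab, ENNReal.rpow_one]

theorem mul_lintegral_add_mul_lintegral_le_of_iSup_eq {f g h : ℝ → ℝ≥0∞} (hf : Measurable f)
    (hg : Measurable g) (hh : Measurable h) {a b : ℝ} (ha : 0 < a) (hb : 0 < b) (hab : a + b = 1)
    (hfg : ⨆ x, f x = ⨆ x, g x) (H : ∀ x y, f x ^ a * g y ^ b ≤ h (a • x + b • y)) :
    ENNReal.ofReal a * (∫⁻ x, f x) + ENNReal.ofReal b * ∫⁻ x, g x ≤ ∫⁻ x, h x := by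
  rw [lintegral_eq_lintegral_measure_ofReal_lt _ hf, lintegral_eq_lintegral_measure_ofReal_lt _ hg,
    lintegral_eq_lintegral_measure_ofReal_lt _ hh, ← lintegral_const_mul' _ _ ENNReal.ofReal_ne_top,
    ← lintegral_const_mul' _ _ ENNReal.ofReal_ne_top]
  refine (le_lintegral_add _ _).trans (lintegral_mono fun t ↦ ?_)
  -- As the suprema agree, the superlevel sets of `f` and `g` are nonempty for the same `t`, which
  -- the one-dimensional Brunn–Minkowski inequality requires.
  by_cases ht : ENNReal.ofReal t < ⨆ x, f x
  · have superlevel_subset : a • {x | ENNReal.ofReal t < f x} + b • {x | ENNReal.ofReal t < g x} ⊆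
        {x | ENNReal.ofReal t < h x} := by
      rintro _ ⟨_, ⟨x, hx, rfl⟩, _, ⟨y, hy, rfl⟩, rfl⟩
      calc ENNReal.ofReal t = ENNReal.ofReal t ^ a * ENNReal.ofReal t ^ b :=
            (rpow_mul_rpow_self ha hb hab _).symm
        _ < f x ^ a * g y ^ b :=
            ENNReal.mul_lt_mul (ENNReal.rpow_lt_rpow hx ha) (ENNReal.rpow_lt_rpow hy hb)
        _ ≤ h (a • x + b • y) := H x y
    have hf_nonempty : {x | ENNReal.ofReal t < f x}.Nonempty := lt_iSup_iff.1 ht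
    have hg_nonempty : {x | ENNReal.ofReal t < g x}.Nonempty := lt_iSup_iff.1 (ht.trans_eq hfg)
    exact (mul_volume_add_mul_volume_le_volume_smul_add_smul
      (measurableSet_lt measurable_const hf) (measurableSet_lt measurable_const hg)
      hf_nonempty hg_nonempty ha hb).trans (measure_mono superlevel_subset)
  · have hf_le : ∀ x, f x ≤ ENNReal.ofReal t := iSup_le_iff.1 (not_lt.1 ht)
    have hg_le : ∀ x, g x ≤ ENNReal.ofReal t := iSup_le_iff.1 (hfg.ge.trans (not_lt.1 ht))
    simp [hf_le, hg_le, ← not_le]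

theorem rpow_lintegral_mul_rpow_lintegral_le_of_iSup_ne_top {f g h : ℝ → ℝ≥0∞} (hf : Measurable f)
    (hg : Measurable g) (hh : Measurable h) {a b : ℝ} (ha : 0 < a) (hb : 0 < b) (hab : a + b = 1)
    (hf_top : ⨆ x, f x ≠ ∞) (hg_top : ⨆ x, g x ≠ ∞)
    (H : ∀ x y, f x ^ a * g y ^ b ≤ h (a • x + b • y)) :
    (∫⁻ x, f x) ^ a * (∫⁻ x, g x) ^ b ≤ ∫⁻ x, h x := by
  set M := ⨆ x, f x with hM
  set N := ⨆ x, g x with hN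
  obtain hM₀ | hM₀ := eq_or_ne M 0
  · have : ∀ x, f x = 0 := by simpa [hM] using hM₀
    simp [this, ha]
  obtain hN₀ | hN₀ := eq_or_ne N 0
  · have : ∀ x, g x = 0 := by simpa [hN] using hN₀
    simp [this, hb]
  have hc₀ : M⁻¹ ^ a * N⁻¹ ^ b ≠ 0 := by simp [ha.le, hb.le, hf_top, hg_top]
  have hc_top : M⁻¹ ^ a * N⁻¹ ^ b ≠ ∞ := by
    refine ENNReal.mul_ne_top ?_ ?_ <;> simp [ha.le, hb.le, hM₀, hN₀]
  have normalized :
      ENNReal.ofReal a * (∫⁻ x, M⁻¹ * f x) + ENNReal.ofReal b * ∫⁻ x, N⁻¹ * g x ≤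
        ∫⁻ x, M⁻¹ ^ a * N⁻¹ ^ b * h x := by
    refine mul_lintegral_add_mul_lintegral_le_of_iSup_eq (hf.const_mul _) (hg.const_mul _)
      (hh.const_mul _) ha hb hab ?_ fun x y ↦ ?_
    · rw [← ENNReal.mul_iSup, ← ENNReal.mul_iSup, ENNReal.inv_mul_cancel hM₀ hf_top,
        ENNReal.inv_mul_cancel hN₀ hg_top]
    · rw [ENNReal.mul_rpow_of_nonneg _ _ ha.le, ENNReal.mul_rpow_of_nonneg _ _ hb.le,
        mul_mul_mul_comm]
      gcongr
      exact H x y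
  have := (rpow_mul_rpow_le_ofReal_mul_add_ofReal_mul ha hb hab _ _).trans normalized
  rwa [lintegral_const_mul _ hf, lintegral_const_mul _ hg, lintegral_const_mul _ hh,
    ENNReal.mul_rpow_of_nonneg _ _ ha.le, ENNReal.mul_rpow_of_nonneg _ _ hb.le,
    mul_mul_mul_comm, ENNReal.mul_le_mul_iff_right hc₀ hc_top] at this

theorem lintegral_eq_iSup_lintegral_min_natCast {α : Type*} [MeasurableSpace α] (μ : Measure α)
    {f : α → ℝ≥0∞} (hf : Measurable f) : ∫⁻ x, f x ∂μ = ⨆ n : ℕ, ∫⁻ x, min (f x) n ∂μ := by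
  rw [← lintegral_iSup (fun n ↦ hf.min measurable_const)
    fun m n hmn x ↦ min_le_min_left _ (by exact_mod_cast hmn)]
  simp only [← inf_iSup_eq, ENNReal.iSup_natCast, inf_top_eq]

/-- A measure `μ` on a real vector space is *Prékopa–Leindler* if it satisfies the
Prékopa–Leindler inequality, the functional form of the Brunn–Minkowski inequality. -/
def PrekopaLeindler {E : Type*} [AddCommGroup E] [Module ℝ E] [MeasurableSpace E]
    (μ : Measure E) : Prop :=
  ∀ ⦃f g h : E → ℝ≥0∞⦄, Measurable f → Measurable g → Measurable h →
    ∀ ⦃a b : ℝ⦄, 0 < a → 0 < b → a + b = 1 →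
      (∀ x y, f x ^ a * g y ^ b ≤ h (a • x + b • y)) →
        (∫⁻ x, f x ∂μ) ^ a * (∫⁻ x, g x ∂μ) ^ b ≤ ∫⁻ x, h x ∂μ

theorem prekopaLeindler_volume_real : PrekopaLeindler (volume : Measure ℝ) := by
  intro f g h hf hg hh a b ha hb hab H
  have iSup_rpow {c : ℝ} (hc : 0 < c) (u : ℕ → ℝ≥0∞) : (⨆ n, u n) ^ c = ⨆ n, u n ^ c :=
    (ENNReal.orderIsoRpow c hc).map_iSup u
  have iSup_min_ne_top (u : ℝ → ℝ≥0∞) (n : ℕ) : ⨆ x, min (u x) n ≠ ∞ :=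
    ne_top_of_le_ne_top (ENNReal.natCast_ne_top n) (iSup_le fun _ ↦ min_le_right _ _)
  rw [lintegral_eq_iSup_lintegral_min_natCast _ hf, lintegral_eq_iSup_lintegral_min_natCast _ hg,
    iSup_rpow ha, iSup_rpow hb]
  simp only [ENNReal.iSup_mul, ENNReal.mul_iSup]
  refine iSup₂_le fun n m ↦ ?_
  refine rpow_lintegral_mul_rpow_lintegral_le_of_iSup_ne_top (hf.min measurable_const)
    (hg.min measurable_const) hh ha hb hab (iSup_min_ne_top f m) (iSup_min_ne_top g n)
    fun x y ↦ le_trans ?_ (H x y)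
  gcongr <;> exact min_le_left _ _

theorem prekopaLeindler_dirac {E : Type*} [AddCommGroup E] [Module ℝ E] [MeasurableSpace E]
    (z : E) : PrekopaLeindler (Measure.dirac z) := by
  intro f g h hf hg hh a b _ _ hab H
  rw [lintegral_dirac' _ hf, lintegral_dirac' _ hg, lintegral_dirac' _ hh]
  simpa [← add_smul, hab] using H z z

namespace PrekopaLeindler

variable {E F : Type*} [AddCommGroup E] [Module ℝ E] [MeasurableSpace E]
  [AddCommGroup F] [Module ℝ F] [MeasurableSpace F] {μ : Measure E} {ν : Measure F}

theorem prod [SFinite ν] (hμ : PrekopaLeindler μ) (hν : PrekopaLeindler ν) :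
    PrekopaLeindler (μ.prod ν) := by
  intro f g h hf hg hh a b ha hb hab H
  rw [lintegral_prod _ hf.aemeasurable, lintegral_prod _ hg.aemeasurable,
    lintegral_prod _ hh.aemeasurable]
  refine hμ hf.lintegral_prod_right' hg.lintegral_prod_right' hh.lintegral_prod_right'
    ha hb hab fun x y ↦ ?_
  exact hν (by fun_prop) (by fun_prop) (by fun_prop) ha hb hab fun u v ↦ H (x, u) (y, v)

theorem map (hμ : PrekopaLeindler μ) (L : E →ₗ[ℝ] F) (hL : Measurable L) :
    PrekopaLeindler (μ.map L) := by
  intro f g h hf hg hh a b ha hb hab H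
  rw [lintegral_map hf hL, lintegral_map hg hL, lintegral_map hh hL]
  refine hμ (hf.comp hL) (hg.comp hL) (hh.comp hL) ha hb hab fun x y ↦ ?_
  simpa using H (L x) (L y)

theorem smul (hμ : PrekopaLeindler μ) (c : ℝ≥0∞) : PrekopaLeindler (c • μ) := by
  intro f g h hf hg hh a b ha hb hab H
  simp only [lintegral_smul_measure, smul_eq_mul]
  rw [ENNReal.mul_rpow_of_nonneg _ _ ha.le, ENNReal.mul_rpow_of_nonneg _ _ hb.le,
    mul_mul_mul_comm, rpow_mul_rpow_self ha hb hab]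
  gcongr
  exact hμ hf hg hh ha hb hab H

end PrekopaLeindler

theorem prekopaLeindler_volume_pi : ∀ n : ℕ, PrekopaLeindler (volume : Measure (Fin n → ℝ))
  | 0 => by
    rw [volume_pi, Measure.pi_of_empty _ 0]
    exact prekopaLeindler_dirac 0
  | n + 1 => by
    have cons_preserving :
        MeasurePreserving (Fin.consLinearEquiv ℝ fun _ : Fin (n + 1) ↦ ℝ) := by
      convert (volume_preserving_piFinSuccAbove (fun _ : Fin (n + 1) ↦ ℝ) 0).symm using 1
      ext p : 1
      exact (Fin.insertNth_zero' (β := ℝ) p.1 p.2).symm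
    rw [← cons_preserving.map_eq]
    exact (prekopaLeindler_volume_real.prod (prekopaLeindler_volume_pi n)).map
      (Fin.consLinearEquiv ℝ fun _ ↦ ℝ).toLinearMap cons_preserving.measurable

theorem prekopaLeindler_of_isAddHaarMeasure {E : Type*} [NormedAddCommGroup E] [NormedSpace ℝ E]
    [FiniteDimensional ℝ E] [MeasurableSpace E] [BorelSpace E] (μ : Measure E)
    [μ.IsAddHaarMeasure] : PrekopaLeindler μ := by
  let L : (Fin (Module.finrank ℝ E) → ℝ) ≃L[ℝ] E :=
    (ContinuousLinearEquiv.ofFinrankEq (by simp)).symm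
  rw [Measure.isAddLeftInvariant_eq_smul μ (volume.map L)]
  exact ((prekopaLeindler_volume_pi _).map L.toLinearMap L.continuous.measurable).smul _

/-! ### Log-concave functions -/

theorem lintegral_ofReal_exp_ne_zero {α : Type*} [MeasurableSpace α] {μ : Measure α} [NeZero μ]
    {u : α → ℝ} (hu : Measurable u) : ∫⁻ x, ENNReal.ofReal (exp (u x)) ∂μ ≠ 0 := by
  refine ((lintegral_pos_iff_support (by fun_prop)).2 ?_).ne'
  simp [Function.support, exp_pos, NeZero.ne]

/-- A function `f : E → ℝ≥0∞` is *log-concave* on `s` if `s` is convex and `log f` is concave on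
`s`. In terms of powers this makes sense also where `f` is `0` or `∞`, the left-hand side being `0`
as soon as one of its factors is. -/
def LogConcaveOn {E : Type*} [AddCommGroup E] [Module ℝ E] (s : Set E) (f : E → ℝ≥0∞) : Prop :=
  Convex ℝ s ∧ ∀ ⦃x⦄, x ∈ s → ∀ ⦃y⦄, y ∈ s → ∀ ⦃a b : ℝ⦄, 0 < a → 0 < b → a + b = 1 →
    f x ^ a * f y ^ b ≤ f (a • x + b • y)

theorem logConcaveOn_ofReal_exp_neg {E : Type*} [AddCommGroup E] [Module ℝ E] {s : Set E}
    {V : E → ℝ} (hV : ConvexOn ℝ s V) : LogConcaveOn s fun x ↦ ENNReal.ofReal (exp (-V x)) := by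
  refine ⟨hV.1, fun x hx y hy a b ha hb hab ↦ ?_⟩
  rw [ENNReal.ofReal_rpow_of_pos (exp_pos _), ENNReal.ofReal_rpow_of_pos (exp_pos _),
    ← ENNReal.ofReal_mul (by positivity), ← exp_mul, ← exp_mul, ← exp_add]
  refine ENNReal.ofReal_le_ofReal (exp_le_exp.2 ?_)
  have := hV.2 hx hy ha.le hb.le hab
  simp only [smul_eq_mul] at this
  linarith

namespace LogConcaveOn

variable {E F : Type*} [AddCommGroup E] [Module ℝ E] [AddCommGroup F] [Module ℝ F]
  [MeasurableSpace F] {s : Set E}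

theorem lintegral {ν : Measure F} (hν : PrekopaLeindler ν) {f : E × F → ℝ≥0∞}
    (hf : LogConcaveOn (s ×ˢ univ) f) (hf_meas : ∀ x, Measurable fun y ↦ f (x, y)) :
    LogConcaveOn s fun x ↦ ∫⁻ y, f (x, y) ∂ν := by
  refine ⟨?_, fun x hx y hy a b ha hb hab ↦ ?_⟩
  · simpa [fst_image_prod] using hf.1.linear_image (LinearMap.fst ℝ E F)
  · exact hν (hf_meas x) (hf_meas y) (hf_meas _) ha hb hab fun u v ↦
      hf.2 (x := (x, u)) (by simpa) (y := (y, v)) (by simpa) ha hb hab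

theorem concaveOn_log_toReal {f : E → ℝ≥0∞} (hf : LogConcaveOn s f) (hf₀ : ∀ x ∈ s, f x ≠ 0)
    (hf_top : ∀ x ∈ s, f x ≠ ∞) : ConcaveOn ℝ s fun x ↦ log (f x).toReal := by
  have toReal_pos {x} (hx : x ∈ s) : 0 < (f x).toReal := ENNReal.toReal_pos (hf₀ x hx) (hf_top x hx)
  refine concaveOn_iff_forall_pos.2 ⟨hf.1, fun x hx y hy a b ha hb hab ↦ ?_⟩
  have hx₀ := rpow_pos_of_pos (toReal_pos hx) a
  have hy₀ := rpow_pos_of_pos (toReal_pos hy) b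
  rw [smul_eq_mul, smul_eq_mul, ← log_rpow (toReal_pos hx), ← log_rpow (toReal_pos hy),
    ← log_mul hx₀.ne' hy₀.ne', ENNReal.toReal_rpow, ENNReal.toReal_rpow, ← ENNReal.toReal_mul]
  refine log_le_log (by simpa [ENNReal.toReal_rpow] using mul_pos hx₀ hy₀) ?_
  exact ENNReal.toReal_mono (hf_top _ (hf.1 hx hy ha.le hb.le hab)) (hf.2 hx hy ha hb hab)

theorem eq_top_of_eq_top [TopologicalSpace E] [IsTopologicalAddGroup E] [ContinuousSMul ℝ E]
    {f : E → ℝ≥0∞} (hf : LogConcaveOn s f) (hs : IsOpen s) (hf₀ : ∀ x ∈ s, f x ≠ 0) {x z : E}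
    (hx : x ∈ s) (hfx : f x = ∞) (hz : z ∈ s) : f z = ∞ := by
  obtain ⟨ε, hw, hε⟩ : ∃ ε : ℝ, z + ε • (z - x) ∈ s ∧ 0 < ε := by
    have : Filter.Tendsto (fun ε : ℝ ↦ z + ε • (z - x)) (nhdsWithin 0 (Ioi 0)) (nhds z) :=
      Continuous.tendsto' (by fun_prop) 0 z (by simp) |>.mono_left nhdsWithin_le_nhds
    exact ((this.eventually (hs.mem_nhds hz)).and self_mem_nhdsWithin).exists
  have z_eq : (ε / (1 + ε)) • x + (1 / (1 + ε)) • (z + ε • (z - x)) = z := by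
    match_scalars <;> field_simp
    ring
  have h := hf.2 hx hw (by positivity : 0 < ε / (1 + ε)) (by positivity : 0 < 1 / (1 + ε))
    (by field_simp; ring)
  rw [z_eq, hfx, ENNReal.top_rpow_of_pos (by positivity), ENNReal.top_mul] at h
  · exact top_le_iff.1 h
  · have : 0 ≤ 1 / (1 + ε) := by positivity
    simp [ENNReal.rpow_eq_zero_iff, hf₀ _ hw, -one_div, this.not_gt]

end LogConcaveOn

theorem convexOn_perspective {E : Type*} [AddCommGroup E] [Module ℝ E] {V : E → ℝ}
    (hV : ConvexOn ℝ univ V) :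
    ConvexOn ℝ (Ioi 0 ×ˢ univ) fun p : ℝ × E ↦ p.1 * V (p.1⁻¹ • p.2) := by
  refine convexOn_iff_forall_pos.2 ⟨(convex_Ioi 0).prod convex_univ, ?_⟩
  rintro ⟨s, x⟩ ⟨hs : 0 < s, -⟩ ⟨t, y⟩ ⟨ht : 0 < t, -⟩ a b ha hb -
  simp only [Prod.smul_mk, Prod.mk_add_mk, smul_eq_mul]
  set r := a * s + b * t with hr
  have hr₀ : 0 < r := by positivity
  have combination : (a * s / r) • s⁻¹ • x + (b * t / r) • t⁻¹ • y = r⁻¹ • (a • x + b • y) := by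
    simp only [smul_smul, smul_add]
    congr 2 <;> field_simp
  have h := hV.2 (mem_univ (s⁻¹ • x)) (mem_univ (t⁻¹ • y)) (by positivity : 0 ≤ a * s / r)
    (by positivity : 0 ≤ b * t / r) (by rw [← add_div, ← hr, div_self hr₀.ne'])
  rw [combination] at h
  calc r * V (r⁻¹ • (a • x + b • y))
      ≤ r * (a * s / r * V (s⁻¹ • x) + b * t / r * V (t⁻¹ • y)) := by gcongr; simpa using h
    _ = a * (s * V (s⁻¹ • x)) + b * (t * V (t⁻¹ • y)) := by field_simp

theorem measurable_of_convexOn_univ {E : Type*} [NormedAddCommGroup E] [NormedSpace ℝ E]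
    [FiniteDimensional ℝ E] [MeasurableSpace E] [BorelSpace E] {V : E → ℝ}
    (hV : ConvexOn ℝ univ V) : Measurable V :=
  (continuousOn_univ.1 (hV.continuousOn isOpen_univ)).measurable

/-! ### Concentration of the information content -/

theorem hasDerivAt_cgf_zero {α : Type*} [MeasurableSpace α] {P : Measure α} [IsProbabilityMeasure P]
    {X : α → ℝ} (h : 0 ∈ interior (integrableExpSet X P)) :
    HasDerivAt (cgf X P) (∫ x, X x ∂P) 0 := by
  simpa [deriv_cgf_zero h] using (analyticAt_cgf h).differentiableAt.hasDerivAt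

theorem le_add_mul_sub_of_hasDerivAt_of_concaveOn {s : Set ℝ} {f : ℝ → ℝ} (hf : ConcaveOn ℝ s f)
    {x y f' : ℝ} (hx : x ∈ s) (hy : y ∈ s) (hf' : HasDerivAt f f' x) :
    f y ≤ f x + f' * (y - x) := by
  rcases lt_trichotomy x y with hxy | rfl | hxy
  · have := hf.slope_le_of_hasDerivAt hx hy hxy hf'
    rw [slope_def_field, div_le_iff₀ (sub_pos.2 hxy)] at this
    linarith
  · simp
  · have := hf.le_slope_of_hasDerivAt hy hx hxy hf'
    rw [slope_def_field, le_div_iff₀ (sub_pos.2 hxy)] at this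
    linarith

/-- The measure with density `exp (-V)` with respect to `μ`. It is not normalized. -/
noncomputable def gibbsMeasure {α : Type*} [MeasurableSpace α] (μ : Measure α) (V : α → ℝ) :
    Measure α :=
  μ.withDensity fun x ↦ ENNReal.ofReal (exp (-V x))

section gibbsMeasure

variable {α : Type*} [MeasurableSpace α] {μ : Measure α} {V : α → ℝ}

theorem gibbsMeasure_univ : gibbsMeasure μ V univ = ∫⁻ x, ENNReal.ofReal (exp (-V x)) ∂μ := by
  rw [gibbsMeasure, withDensity_apply _ .univ, Measure.restrict_univ]

theorem isProbabilityMeasure_gibbsMeasure (hV : ∫ x, exp (-V x) ∂μ = 1) :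
    IsProbabilityMeasure (gibbsMeasure μ V) := by
  have h_int : Integrable (fun x ↦ exp (-V x)) μ := .of_integral_ne_zero (by simp [hV])
  constructor
  rw [gibbsMeasure_univ,
    ← ofReal_integral_eq_lintegral_ofReal h_int (.of_forall fun x ↦ (exp_pos _).le), hV,
    ENNReal.ofReal_one]

theorem lintegral_ofReal_exp_mul_gibbsMeasure (hV : Measurable V) (β : ℝ) :
    ∫⁻ x, ENNReal.ofReal (exp (β * V x)) ∂gibbsMeasure μ V =
      ∫⁻ x, ENNReal.ofReal (exp (-((1 - β) * V x))) ∂μ := by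
  rw [gibbsMeasure, lintegral_withDensity_eq_lintegral_mul _ (by fun_prop) (by fun_prop)]
  refine lintegral_congr fun x ↦ ?_
  rw [Pi.mul_apply, ← ENNReal.ofReal_mul (exp_pos _).le, ← exp_add]
  ring_nf

end gibbsMeasure

/-- The integral of `exp (-s V(x / s))`, whose exponent is the perspective function of `V`. Up to
the factor `s ^ n` in dimension `n`, it is the partition function `∫ exp (-s V)` of `V` at inverse
temperature `s`; unlike the latter it is log-concave in `s` for convex `V`. -/
noncomputable def perspectiveIntegral {E : Type*} [AddCommGroup E] [Module ℝ E] [MeasurableSpace E]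
    (μ : Measure E) (V : E → ℝ) (s : ℝ) : ℝ≥0∞ :=
  ∫⁻ x, ENNReal.ofReal (exp (-(s * V (s⁻¹ • x)))) ∂μ

theorem perspectiveIntegral_ne_zero {E : Type*} [AddCommGroup E] [Module ℝ E] [MeasurableSpace E]
    [MeasurableConstSMul ℝ E] {μ : Measure E} [NeZero μ] {V : E → ℝ} (hV : Measurable V) (s : ℝ) :
    perspectiveIntegral μ V s ≠ 0 :=
  lintegral_ofReal_exp_ne_zero (by fun_prop)

section LogConcaveGibbs

variable {E : Type*} [NormedAddCommGroup E] [NormedSpace ℝ E] [FiniteDimensional ℝ E]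
  [MeasurableSpace E] [BorelSpace E] {μ : Measure E} [μ.IsAddHaarMeasure] {V : E → ℝ}

theorem perspectiveIntegral_one_sub (hV : Measurable V) {β : ℝ} (hβ : β < 1) :
    perspectiveIntegral μ V (1 - β) = ENNReal.ofReal ((1 - β) ^ Module.finrank ℝ E) *
      ∫⁻ x, ENNReal.ofReal (exp (β * V x)) ∂gibbsMeasure μ V := by
  have hs : 0 < 1 - β := sub_pos.2 hβ
  calc perspectiveIntegral μ V (1 - β)
      = ∫⁻ y, ENNReal.ofReal (exp (-((1 - β) * V y))) ∂μ.map ((1 - β)⁻¹ • ·) := by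
        rw [lintegral_map (by fun_prop) (by fun_prop), perspectiveIntegral]
    _ = _ := by
        rw [lintegral_ofReal_exp_mul_gibbsMeasure hV,
          Measure.map_addHaar_smul μ (inv_ne_zero hs.ne'), lintegral_smul_measure, inv_pow, inv_inv,
          abs_of_pos (by positivity), smul_eq_mul]

theorem logConcaveOn_perspectiveIntegral (hV : ConvexOn ℝ univ V) :
    LogConcaveOn (Ioi 0) (perspectiveIntegral μ V) := by
  have := measurable_of_convexOn_univ hV
  exact (logConcaveOn_ofReal_exp_neg (convexOn_perspective hV)).lintegral
    (prekopaLeindler_of_isAddHaarMeasure μ) (by fun_prop)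

theorem perspectiveIntegral_ne_top [IsFiniteMeasure (gibbsMeasure μ V)] (hV : ConvexOn ℝ univ V)
    {s : ℝ} (hs : 0 < s) : perspectiveIntegral μ V s ≠ ∞ := by
  have hV_meas := measurable_of_convexOn_univ hV
  intro h
  have h_one := (logConcaveOn_perspectiveIntegral hV).eq_top_of_eq_top isOpen_Ioi
    (fun s _ ↦ perspectiveIntegral_ne_zero hV_meas s) hs h (mem_Ioi.2 one_pos)
  refine measure_ne_top (gibbsMeasure μ V) univ ?_
  simpa [gibbsMeasure_univ, perspectiveIntegral] using h_one

theorem integrable_exp_mul_gibbsMeasure [IsFiniteMeasure (gibbsMeasure μ V)]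
    (hV : ConvexOn ℝ univ V) {β : ℝ} (hβ : β < 1) :
    Integrable (fun x ↦ exp (β * V x)) (gibbsMeasure μ V) := by
  have hV_meas := measurable_of_convexOn_univ hV
  refine ⟨Measurable.aestronglyMeasurable (by fun_prop), ?_⟩
  rw [hasFiniteIntegral_iff_ofReal (.of_forall fun x ↦ (exp_pos _).le), lt_top_iff_ne_top]
  intro h
  refine perspectiveIntegral_ne_top (μ := μ) hV (sub_pos.2 hβ) ?_
  rw [perspectiveIntegral_one_sub hV_meas hβ, h, ENNReal.mul_top]
  simpa using pow_pos (sub_pos.2 hβ) _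

theorem zero_mem_interior_integrableExpSet_gibbsMeasure [IsFiniteMeasure (gibbsMeasure μ V)]
    (hV : ConvexOn ℝ univ V) : 0 ∈ interior (integrableExpSet V (gibbsMeasure μ V)) :=
  mem_interior.2
    ⟨Iio 1, fun _ hβ ↦ integrable_exp_mul_gibbsMeasure hV hβ, isOpen_Iio, mem_Iio.2 one_pos⟩

theorem integrable_gibbsMeasure [IsFiniteMeasure (gibbsMeasure μ V)] (hV : ConvexOn ℝ univ V) :
    Integrable V (gibbsMeasure μ V) :=
  integrable_of_mem_interior_integrableExpSet (zero_mem_interior_integrableExpSet_gibbsMeasure hV)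

theorem log_toReal_perspectiveIntegral_one_sub [IsProbabilityMeasure (gibbsMeasure μ V)]
    (hV : ConvexOn ℝ univ V) {β : ℝ} (hβ : β < 1) :
    log (perspectiveIntegral μ V (1 - β)).toReal =
      cgf V (gibbsMeasure μ V) β + Module.finrank ℝ E * log (1 - β) := by
  have h_int := integrable_exp_mul_gibbsMeasure (μ := μ) hV hβ
  have : 0 < 1 - β := sub_pos.2 hβ
  have lintegral_exp : ∫⁻ x, ENNReal.ofReal (exp (β * V x)) ∂gibbsMeasure μ V =
      ENNReal.ofReal (mgf V (gibbsMeasure μ V) β) :=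
    (ofReal_integral_eq_lintegral_ofReal h_int (.of_forall fun x ↦ (exp_pos _).le)).symm
  rw [perspectiveIntegral_one_sub (measurable_of_convexOn_univ hV) hβ, lintegral_exp,
    ENNReal.toReal_mul, ENNReal.toReal_ofReal (by positivity), ENNReal.toReal_ofReal mgf_nonneg,
    log_mul (by positivity) (mgf_pos h_int).ne', log_pow, cgf, add_comm]

theorem concaveOn_cgf_gibbsMeasure_add_log [IsProbabilityMeasure (gibbsMeasure μ V)]
    (hV : ConvexOn ℝ univ V) :
    ConcaveOn ℝ (Iio 1) fun β ↦
      cgf V (gibbsMeasure μ V) β + Module.finrank ℝ E * log (1 - β) := by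
  have h : ConcaveOn ℝ (Ioi 0) fun s ↦ log (perspectiveIntegral μ V s).toReal :=
    (logConcaveOn_perspectiveIntegral hV).concaveOn_log_toReal
      (fun s _ ↦ perspectiveIntegral_ne_zero (measurable_of_convexOn_univ hV) s)
      fun s hs ↦ perspectiveIntegral_ne_top hV hs
  have preimage_Ioi : (fun β : ℝ ↦ 1 - β) ⁻¹' Ioi 0 = Iio 1 := by ext; simp
  rw [← preimage_Ioi]
  refine (h.comp_affineMap (AffineEquiv.constVSub ℝ (1 : ℝ)).toAffineMap).congr fun β hβ ↦ ?_
  exact log_toReal_perspectiveIntegral_one_sub hV (sub_pos.1 hβ)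

theorem cgf_gibbsMeasure_le [IsProbabilityMeasure (gibbsMeasure μ V)] (hV : ConvexOn ℝ univ V)
    {β : ℝ} (hβ : β < 1) :
    cgf V (gibbsMeasure μ V) β ≤
      β * ∫ x, V x ∂gibbsMeasure μ V + Module.finrank ℝ E * (-β - log (1 - β)) := by
  have h_deriv : HasDerivAt (fun β ↦ cgf V (gibbsMeasure μ V) β + Module.finrank ℝ E * log (1 - β))
      (∫ x, V x ∂gibbsMeasure μ V - Module.finrank ℝ E) 0 := by
    have h_cgf := hasDerivAt_cgf_zero (zero_mem_interior_integrableExpSet_gibbsMeasure (μ := μ) hV)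
    have h_log : HasDerivAt (fun β : ℝ ↦ log (1 - β)) (-1 / (1 - 0)) 0 :=
      ((hasDerivAt_id (0 : ℝ)).const_sub 1).log (by simp)
    exact (h_cgf.add (h_log.const_mul _)).congr_deriv (by ring)
  have := le_add_mul_sub_of_hasDerivAt_of_concaveOn (concaveOn_cgf_gibbsMeasure_add_log hV)
    (mem_Iio.2 one_pos) (mem_Iio.2 hβ) h_deriv
  simp only [cgf_zero, sub_zero, log_one, mul_zero, zero_add] at this
  linarith

end LogConcaveGibbs

theorem neg_sub_log_one_sub_le {β : ℝ} (hβ : |β| ≤ 1 / 2) : -β - log (1 - β) ≤ 2 * β ^ 2 := by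
  have hβ' : β ≤ 1 / 2 := (le_abs_self β).trans hβ
  have h_pos : 0 < 1 - β := by linarith
  calc -β - log (1 - β) ≤ -β - (1 - (1 - β)⁻¹) := by gcongr; exact one_sub_inv_le_log_of_pos h_pos
    _ = β ^ 2 / (1 - β) := by field_simp; ring
    _ ≤ 2 * β ^ 2 := by
      rw [div_le_iff₀ h_pos]
      nlinarith [sq_nonneg β]

theorem exists_chernoff_parameter {n s : ℝ} (hn : 0 < n) (hs : 0 ≤ s) :
    ∃ β, 0 ≤ β ∧ β ≤ 1 / 2 ∧ -β * s + 2 * n * β ^ 2 ≤ -(1 / 8) * min s (s ^ 2 / n) := by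
  -- The left-hand side is least at `β = s / (4 n)`; beyond `1 / 2` the best choice is `1 / 2`.
  rcases le_or_gt s (2 * n) with h | h
  · refine ⟨s / (4 * n), by positivity, by rw [div_le_iff₀ (by positivity)]; linarith, ?_⟩
    calc -(s / (4 * n)) * s + 2 * n * (s / (4 * n)) ^ 2 = -(1 / 8) * (s ^ 2 / n) := by
          field_simp
          ring
      _ ≤ -(1 / 8) * min s (s ^ 2 / n) := by linarith [min_le_right s (s ^ 2 / n)]
  · exact ⟨1 / 2, by norm_num, le_rfl, by linarith [min_le_left s (s ^ 2 / n)]⟩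

theorem measure_lt_abs_sub_le_of_cgf_le {α : Type*} [MeasurableSpace α] {P : Measure α}
    [IsFiniteMeasure P] {X : α → ℝ} {m n s : ℝ} (hn : 0 < n) (hs : 0 ≤ s)
    (h_int : ∀ β, |β| ≤ 1 / 2 → Integrable (fun x ↦ exp (β * X x)) P)
    (h_cgf : ∀ β, |β| ≤ 1 / 2 → cgf X P β ≤ β * m + 2 * n * β ^ 2) :
    P {x | s < |X x - m|} ≤ ENNReal.ofReal (2 * exp (-(1 / 8) * min s (s ^ 2 / n))) := by
  obtain ⟨β, hβ₀, hβ_half, hβ⟩ := exists_chernoff_parameter hn hs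
  have hβ_abs : |β| ≤ 1 / 2 := by rwa [abs_of_nonneg hβ₀]
  have hβ_abs_neg : |-β| ≤ 1 / 2 := by rwa [abs_neg]
  have upper : P.real {x | m + s ≤ X x} ≤ exp (-(1 / 8) * min s (s ^ 2 / n)) := by
    refine (measure_ge_le_exp_cgf _ hβ₀ (h_int β hβ_abs)).trans (exp_le_exp.2 ?_)
    linarith [h_cgf β hβ_abs]
  have lower : P.real {x | X x ≤ m - s} ≤ exp (-(1 / 8) * min s (s ^ 2 / n)) := by
    refine (measure_le_le_exp_cgf _ (neg_nonpos.2 hβ₀) (h_int _ hβ_abs_neg)).trans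
      (exp_le_exp.2 ?_)
    linarith [neg_sq β ▸ h_cgf _ hβ_abs_neg]
  have tail_subset : {x | s < |X x - m|} ⊆ {x | m + s ≤ X x} ∪ {x | X x ≤ m - s} :=
    fun x (hx : s < |X x - m|) ↦ (lt_abs.1 hx).imp
      (fun h ↦ (by linarith : m + s ≤ X x)) fun h ↦ (by linarith : X x ≤ m - s)
  rw [← ofReal_measureReal]
  gcongr
  linarith [measureReal_mono (μ := P) tail_subset,
    measureReal_union_le (μ := P) {x | m + s ≤ X x} {x | X x ≤ m - s}]

theorem gibbsMeasure_lt_abs_sub_integral_le {E : Type*} [NormedAddCommGroup E] [NormedSpace ℝ E]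
    [FiniteDimensional ℝ E] [MeasurableSpace E] [BorelSpace E] {μ : Measure E} [μ.IsAddHaarMeasure]
    {V : E → ℝ} [IsProbabilityMeasure (gibbsMeasure μ V)] (hV : ConvexOn ℝ univ V) {n s : ℝ}
    (hn : 0 < n) (hn_dim : Module.finrank ℝ E ≤ n) (hs : 0 ≤ s) :
    gibbsMeasure μ V {x | s < |V x - ∫ y, V y ∂gibbsMeasure μ V|} ≤
      ENNReal.ofReal (2 * exp (-(1 / 8) * min s (s ^ 2 / n))) := by
  have lt_one {β : ℝ} (hβ : |β| ≤ 1 / 2) : β < 1 := by linarith [le_abs_self β]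
  refine measure_lt_abs_sub_le_of_cgf_le hn hs
    (fun β hβ ↦ integrable_exp_mul_gibbsMeasure hV (lt_one hβ)) fun β hβ ↦ ?_
  calc cgf V (gibbsMeasure μ V) β
      ≤ β * ∫ x, V x ∂gibbsMeasure μ V + Module.finrank ℝ E * (-β - log (1 - β)) :=
        cgf_gibbsMeasure_le hV (lt_one hβ)
    _ ≤ β * ∫ x, V x ∂gibbsMeasure μ V + n * (2 * β ^ 2) := by
        have := log_le_sub_one_of_pos (sub_pos.2 (lt_one hβ))
        gcongr
        · linarith
        · exact neg_sub_log_one_sub_le hβ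
    _ = β * ∫ x, V x ∂gibbsMeasure μ V + 2 * n * β ^ 2 := by ring

/-! ### Marginals and conditional information -/

/-- The marginal density `x ↦ ∫ exp (-W (x, y)) dν(y)`, with values in `ℝ≥0∞`. -/
noncomputable def marginalDensity {E F : Type*} [MeasurableSpace F] (ν : Measure F)
    (W : E × F → ℝ) (x : E) : ℝ≥0∞ :=
  ∫⁻ y, ENNReal.ofReal (exp (-W (x, y))) ∂ν

/-- The potential of the marginal density, meaningful where this density is finite. -/
noncomputable def marginalPotential {E F : Type*} [MeasurableSpace F] (ν : Measure F)
    (W : E × F → ℝ) (x : E) : ℝ :=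
  -log (marginalDensity ν W x).toReal

theorem marginalDensity_ne_zero {E F : Type*} [MeasurableSpace E] [MeasurableSpace F]
    {ν : Measure F} [NeZero ν] {W : E × F → ℝ} (hW : Measurable W) (x : E) :
    marginalDensity ν W x ≠ 0 :=
  lintegral_ofReal_exp_ne_zero (by fun_prop)

theorem measure_lt_abs_sub_sub_sub_le {α : Type*} [MeasurableSpace α] (P : Measure α)
    (X Y : α → ℝ) (x y t : ℝ) :
    P {ω | t < |X ω - Y ω - (x - y)|} ≤
      P {ω | t / 2 < |X ω - x|} + P {ω | t / 2 < |Y ω - y|} := by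
  refine (measure_mono fun ω (hω : t < |X ω - Y ω - (x - y)|) ↦ ?_).trans (measure_union_le _ _)
  by_contra! h
  simp only [mem_union, mem_ofPred_eq, not_or, not_lt] at h
  rw [sub_sub_sub_comm] at hω
  linarith [abs_sub (X ω - x) (Y ω - y)]

theorem min_div_eight_le_min_half {n t : ℝ} (ht : 0 ≤ t) :
    min t (t ^ 2 / n) / 8 ≤ min (t / 2) ((t / 2) ^ 2 / (2 * n)) := by
  refine le_min (by linarith [min_le_left t (t ^ 2 / n)]) ?_
  calc min t (t ^ 2 / n) / 8 ≤ t ^ 2 / n / 8 := by gcongr; exact min_le_right _ _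
    _ = (t / 2) ^ 2 / (2 * n) := by ring

section Marginal

variable {E F : Type*} [NormedAddCommGroup E] [NormedSpace ℝ E] [FiniteDimensional ℝ E]
  [MeasurableSpace E] [BorelSpace E] [NormedAddCommGroup F] [NormedSpace ℝ F]
  [FiniteDimensional ℝ F] [MeasurableSpace F] [BorelSpace F] {ν : Measure F} [ν.IsAddHaarMeasure]
  {W : E × F → ℝ}

theorem logConcaveOn_marginalDensity (hW : ConvexOn ℝ univ W) :
    LogConcaveOn univ (marginalDensity ν W) := by
  have := measurable_of_convexOn_univ hW
  rw [← univ_prod_univ] at hW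
  exact (logConcaveOn_ofReal_exp_neg hW).lintegral (prekopaLeindler_of_isAddHaarMeasure ν)
    (by fun_prop)

variable {μ : Measure E} [μ.IsAddHaarMeasure]

theorem marginalDensity_ne_top [IsFiniteMeasure (gibbsMeasure (μ.prod ν) W)]
    (hW : ConvexOn ℝ univ W) (x : E) : marginalDensity ν W x ≠ ∞ := by
  have hW_meas := measurable_of_convexOn_univ hW
  intro hx
  have eq_top (z : E) : marginalDensity ν W z = ∞ :=
    (logConcaveOn_marginalDensity hW).eq_top_of_eq_top isOpen_univ
      (fun x _ ↦ marginalDensity_ne_zero hW_meas x) (mem_univ x) hx (mem_univ z)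
  refine measure_ne_top (gibbsMeasure (μ.prod ν) W) univ ?_
  calc gibbsMeasure (μ.prod ν) W univ = ∫⁻ x, marginalDensity ν W x ∂μ := by
        rw [gibbsMeasure_univ, lintegral_prod _ (Measurable.aemeasurable (by fun_prop))]
        simp only [marginalDensity]
    _ = ∞ := by simp [eq_top, NeZero.ne]

theorem ofReal_exp_neg_marginalPotential [IsFiniteMeasure (gibbsMeasure (μ.prod ν) W)]
    (hW : ConvexOn ℝ univ W) (x : E) :
    ENNReal.ofReal (exp (-marginalPotential ν W x)) = marginalDensity ν W x := by
  have h₀ := marginalDensity_ne_zero (ν := ν) (measurable_of_convexOn_univ hW) x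
  have h_top := marginalDensity_ne_top (μ := μ) (ν := ν) hW x
  rw [marginalPotential, neg_neg, exp_log (ENNReal.toReal_pos h₀ h_top),
    ENNReal.ofReal_toReal h_top]

theorem convexOn_marginalPotential [IsFiniteMeasure (gibbsMeasure (μ.prod ν) W)]
    (hW : ConvexOn ℝ univ W) : ConvexOn ℝ univ (marginalPotential ν W) :=
  ((logConcaveOn_marginalDensity hW).concaveOn_log_toReal
    (fun x _ ↦ marginalDensity_ne_zero (measurable_of_convexOn_univ hW) x)
    fun x _ ↦ marginalDensity_ne_top (μ := μ) hW x).neg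

theorem map_fst_gibbsMeasure [IsFiniteMeasure (gibbsMeasure (μ.prod ν) W)]
    (hW : ConvexOn ℝ univ W) :
    (gibbsMeasure (μ.prod ν) W).map Prod.fst = gibbsMeasure μ (marginalPotential ν W) := by
  have := measurable_of_convexOn_univ hW
  ext s hs
  rw [Measure.map_apply measurable_fst hs, gibbsMeasure, gibbsMeasure,
    withDensity_apply _ (measurable_fst hs), withDensity_apply _ hs, ← prod_univ,
    setLIntegral_prod _ (Measurable.aemeasurable (by fun_prop))]
  simp only [ofReal_exp_neg_marginalPotential (μ := μ) hW, Measure.restrict_univ, marginalDensity]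

theorem gibbsMeasure_lt_abs_marginalPotential_sub_integral_le
    [IsProbabilityMeasure (gibbsMeasure (μ.prod ν) W)] (hW : ConvexOn ℝ univ W) {n s : ℝ}
    (hn : 0 < n) (hn_dim : Module.finrank ℝ E ≤ n) (hs : 0 ≤ s) :
    gibbsMeasure (μ.prod ν) W {p | s < |marginalPotential ν W p.1 -
        ∫ q, marginalPotential ν W q.1 ∂gibbsMeasure (μ.prod ν) W|} ≤
      ENNReal.ofReal (2 * exp (-(1 / 8) * min s (s ^ 2 / n))) := by
  have hV := convexOn_marginalPotential (μ := μ) (ν := ν) hW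
  have hV_meas := measurable_of_convexOn_univ hV
  have h_map := map_fst_gibbsMeasure (μ := μ) (ν := ν) hW
  have : IsProbabilityMeasure (gibbsMeasure μ (marginalPotential ν W)) :=
    h_map ▸ Measure.isProbabilityMeasure_map measurable_fst.aemeasurable
  have h := gibbsMeasure_lt_abs_sub_integral_le (μ := μ) hV hn hn_dim hs
  rwa [← h_map, Measure.map_apply measurable_fst (measurableSet_lt (by fun_prop) (by fun_prop)),
    integral_map measurable_fst.aemeasurable hV_meas.aestronglyMeasurable] at h

theorem integrable_marginalPotential_fst [IsFiniteMeasure (gibbsMeasure (μ.prod ν) W)]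
    (hW : ConvexOn ℝ univ W) :
    Integrable (fun p ↦ marginalPotential ν W p.1) (gibbsMeasure (μ.prod ν) W) := by
  have h_map := map_fst_gibbsMeasure (μ := μ) (ν := ν) hW
  have : IsFiniteMeasure (gibbsMeasure μ (marginalPotential ν W)) := h_map ▸ inferInstance
  have h := integrable_gibbsMeasure (μ := μ) (convexOn_marginalPotential (μ := μ) (ν := ν) hW)
  exact (h_map ▸ h).comp_measurable measurable_fst

theorem neg_log_exp_neg_div_marginalDensity [IsFiniteMeasure (gibbsMeasure (μ.prod ν) W)]
    (hW : ConvexOn ℝ univ W) (p : E × F) :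
    -log (exp (-W p) / (marginalDensity ν W p.1).toReal) = W p - marginalPotential ν W p.1 := by
  have h_pos := ENNReal.toReal_pos (marginalDensity_ne_zero (measurable_of_convexOn_univ hW) p.1)
    (marginalDensity_ne_top (μ := μ) (ν := ν) hW p.1)
  rw [log_div (exp_pos _).ne' h_pos.ne', log_exp, marginalPotential]
  ring

theorem gibbsMeasure_lt_abs_sub_marginalPotential_le
    [IsProbabilityMeasure (gibbsMeasure (μ.prod ν) W)] (hW : ConvexOn ℝ univ W) {n t : ℝ}
    (hn : 0 < n) (hn_dim : Module.finrank ℝ (E × F) ≤ n) (ht : 0 ≤ t) :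
    gibbsMeasure (μ.prod ν) W {p | t < |W p - marginalPotential ν W p.1 -
        ∫ q, (W q - marginalPotential ν W q.1) ∂gibbsMeasure (μ.prod ν) W|} ≤
      ENNReal.ofReal (4 * exp (-(1 / 8) * min (t / 2) ((t / 2) ^ 2 / n))) := by
  have hnE : Module.finrank ℝ E ≤ n := le_trans (by simp) hn_dim
  rw [integral_sub (integrable_gibbsMeasure hW) (integrable_marginalPotential_fst hW)]
  calc _ ≤ _ := measure_lt_abs_sub_sub_sub_le _ _ _ _ _ _
    _ ≤ _ := add_le_add (gibbsMeasure_lt_abs_sub_integral_le hW hn hn_dim (by positivity))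
      (gibbsMeasure_lt_abs_marginalPotential_sub_integral_le hW hn hnE (by positivity))
    _ = _ := by
      rw [← ENNReal.ofReal_add (by positivity) (by positivity)]
      ring_nf

theorem conditional_information_concentration_general (hW : ConvexOn ℝ univ W)
    (hW_int : ∫ p, exp (-W p) ∂μ.prod ν = 1) {fX : E → ℝ}
    (hfX : ∀ x, fX x = ∫ y, exp (-W (x, y)) ∂ν) {ic : E × F → ℝ}
    (hic : ∀ p, ic p = -log (exp (-W p) / fX p.1)) {n t : ℝ} (hn : 0 < n)
    (hnE : Module.finrank ℝ E ≤ n) (hnF : Module.finrank ℝ F ≤ n) (ht : 0 ≤ t) :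
    gibbsMeasure (μ.prod ν) W {p | t < |ic p - ∫ q, ic q ∂gibbsMeasure (μ.prod ν) W|} ≤
      ENNReal.ofReal (4 * exp (-(1 / 64) * min t (t ^ 2 / n))) := by
  have := measurable_of_convexOn_univ hW
  have := isProbabilityMeasure_gibbsMeasure hW_int
  have fX_eq (x : E) : fX x = (marginalDensity ν W x).toReal := by
    rw [hfX, integral_eq_lintegral_of_nonneg_ae (.of_forall fun y ↦ (exp_pos _).le)
      (Measurable.aestronglyMeasurable (by fun_prop)), marginalDensity]
  have ic_eq (p : E × F) : ic p = W p - marginalPotential ν W p.1 := by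
    rw [hic, fX_eq, neg_log_exp_neg_div_marginalDensity (μ := μ) hW]
  have finrank_prod_le : Module.finrank ℝ (E × F) ≤ 2 * n := by
    rw [Module.finrank_prod]
    push_cast
    linarith
  simp only [ic_eq]
  refine (gibbsMeasure_lt_abs_sub_marginalPotential_le hW (by positivity) finrank_prod_le ht).trans
    (ENNReal.ofReal_le_ofReal ?_)
  gcongr 4 * exp ?_
  linarith [min_div_eight_le_min_half (n := n) ht]

end Marginal

end

/-- There are universal constants `c₁, c₂ > 0` such that for every dimension
`d`, every log-concave joint density `f(x,y) = e^{-W(x,y)}` on `ℝ^d × ℝ^d` (with `W` convex and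
`∫ e^{-W} = 1`), the conditional information content `-log f(Y|X)` concentrates around the
conditional differential entropy: `P(|-log f(Y|X) - E[-log f(Y|X)]| > t) ≤
2 c₁ exp(-(c₂/2) min(t, t²/d))` for all `t ≥ 0`. -/
theorem conditional_information_concentration :
    ∃ c₁ c₂ : ℝ, 0 < c₁ ∧ 0 < c₂ ∧
      ∀ (d : ℕ), 0 < d →
      ∀ (W : EuclideanSpace ℝ (Fin d) × EuclideanSpace ℝ (Fin d) → ℝ),
        ConvexOn ℝ Set.univ W →
        (∫ p, Real.exp (-W p)) = 1 →
      ∀ (μ : Measure (EuclideanSpace ℝ (Fin d) × EuclideanSpace ℝ (Fin d))),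
        μ = volume.withDensity (fun p => ENNReal.ofReal (Real.exp (-W p))) →
      ∀ (fX : EuclideanSpace ℝ (Fin d) → ℝ),
        (∀ x, fX x = ∫ y, Real.exp (-W (x, y))) →
      ∀ (ic : EuclideanSpace ℝ (Fin d) × EuclideanSpace ℝ (Fin d) → ℝ),
        (∀ p, ic p = -Real.log (Real.exp (-W p) / fX p.1)) →
      ∀ t : ℝ, 0 ≤ t →
        μ {p | t < |ic p - ∫ q, ic q ∂μ|}
          ≤ ENNReal.ofReal (2 * c₁ * Real.exp (-(c₂ / 2) * min t (t ^ 2 / d))) := by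
  refine ⟨2, 1 / 32, by norm_num, by norm_num, ?_⟩
  rintro d hd W hW hW_int _ rfl fX hfX ic hic t ht
  have hd' : (0 : ℝ) < d := by exact_mod_cast hd
  exact (conditional_information_concentration_general hW hW_int hfX hic hd' (by simp) (by simp)
    ht).trans_eq (by norm_num)
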